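/- Let A be a finite-dimensional left Leibniz algebra over a field F of characteristic zero, let R = rad(A) be its radical and N = nilrad(A) its nilradical. Then A·R + R·A ⊆ N. -/

import Mathlib

open Submodule

section LeibnizDefs

variable {F : Type*} {A : Type*} [Field F] [AddCommGroup A] [Module F A]

/-- The span of all products `b*c` with `b ∈ B`, `c ∈ C`. -/
def mulSub (mul : A →ₗ[F] A →ₗ[F] A) (B C : Submodule F A) : Submodule F A :=
  Submodule.span F {z : A | ∃ b ∈ B, ∃ c ∈ C, mul b c = z}

/-- `fSub mul B C = B·C + C·B`, the function `f(B,C)`. -/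
def fSub (mul : A →ₗ[F] A →ₗ[F] A) (B C : Submodule F A) : Submodule F A :=
  mulSub mul B C ⊔ mulSub mul C B

/-- `fIter mul B C n = f^{n+1}(B,C)` (so index `0` is `f^1(B,C) = f(B,C)`). -/
def fIter (mul : A →ₗ[F] A →ₗ[F] A) (B C : Submodule F A) : ℕ → Submodule F A
  | 0 => fSub mul B C
  | n + 1 => fSub mul B (fIter mul B C n)

/-- `lcs mul B n = B^{n+1}`, the lower central series (index `0` is `B^1 = B`). -/
def lcs (mul : A →ₗ[F] A →ₗ[F] A) (B : Submodule F A) : ℕ → Submodule F A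
  | 0 => B
  | n + 1 => mulSub mul B (lcs mul B n)

/-- `ds mul B n = B^{(n+1)}`, the derived series (index `0` is `B^{(1)} = B`). -/
def ds (mul : A →ₗ[F] A →ₗ[F] A) (B : Submodule F A) : ℕ → Submodule F A
  | 0 => B
  | n + 1 => mulSub mul (ds mul B n) (ds mul B n)

/-- `B^ω = ⋂_{i ≥ 1} B^i`. -/
def omegaSub (mul : A →ₗ[F] A →ₗ[F] A) (B : Submodule F A) : Submodule F A :=
  ⨅ n, lcs mul B n

/-- `B` is a subalgebra: a subspace closed under multiplication. -/
def IsSubalg (mul : A →ₗ[F] A →ₗ[F] A) (B : Submodule F A) : Prop :=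
  ∀ x ∈ B, ∀ y ∈ B, mul x y ∈ B

/-- `I` is an ideal of the subalgebra `S`: `I ⊆ S` and `xI + Ix ⊆ I` for all `x ∈ S`. -/
def IsIdealIn (mul : A →ₗ[F] A →ₗ[F] A) (I S : Submodule F A) : Prop :=
  I ≤ S ∧ ∀ x ∈ S, ∀ y ∈ I, mul x y ∈ I ∧ mul y x ∈ I

/-- `B` is subinvariant in `S`: there is a chain of subalgebras
`B = c 0 ⊆ c 1 ⊆ ⋯ ⊆ c t = S` with each term an ideal of the next. -/
def IsSubinvariantIn (mul : A →ₗ[F] A →ₗ[F] A) (B S : Submodule F A) : Prop :=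
  ∃ (t : ℕ) (c : ℕ → Submodule F A), c 0 = B ∧ c t = S ∧
    (∀ i ≤ t, IsSubalg mul (c i)) ∧ ∀ i < t, IsIdealIn mul (c i) (c (i + 1))

/-- `B` is nilpotent: `B^m = 0` for some `m`. -/
def IsNilpotentSub (mul : A →ₗ[F] A →ₗ[F] A) (B : Submodule F A) : Prop :=
  ∃ m, lcs mul B m = ⊥

/-- `B` is solvable: `B^{(m)} = 0` for some `m`. -/
def IsSolvableSub (mul : A →ₗ[F] A →ₗ[F] A) (B : Submodule F A) : Prop :=
  ∃ m, ds mul B m = ⊥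

/-- The centralizer `Z_A(B) = {x : xb = 0 = bx for all b ∈ B}`. -/
def centralizerSet (mul : A →ₗ[F] A →ₗ[F] A) (B : Submodule F A) : Set A :=
  {x : A | ∀ b ∈ B, mul x b = 0 ∧ mul b x = 0}

/-- `R` is the radical (the maximal solvable ideal) of the subalgebra `S`. -/
def IsRadicalIn (mul : A →ₗ[F] A →ₗ[F] A) (S R : Submodule F A) : Prop :=
  IsIdealIn mul R S ∧ IsSolvableSub mul R ∧
    ∀ T, IsIdealIn mul T S → IsSolvableSub mul T → T ≤ R

/-- `N` is the nilradical (the maximal nilpotent ideal) of the subalgebra `S`. -/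
def IsNilradicalIn (mul : A →ₗ[F] A →ₗ[F] A) (S N : Submodule F A) : Prop :=
  IsIdealIn mul N S ∧ IsNilpotentSub mul N ∧
    ∀ T, IsIdealIn mul T S → IsNilpotentSub mul T → T ≤ N

/-- `H` is a Cartan subalgebra: a nilpotent self-normalizing subalgebra. -/
def IsCartan (mul : A →ₗ[F] A →ₗ[F] A) (H : Submodule F A) : Prop :=
  IsSubalg mul H ∧ IsNilpotentSub mul H ∧
    ∀ x : A, (∀ h ∈ H, mul x h ∈ H ∧ mul h x ∈ H) → x ∈ H

/-- The subalgebra generated by a set: the smallest subalgebra containing it. -/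
def subalgGen (mul : A →ₗ[F] A →ₗ[F] A) (s : Set A) : Submodule F A :=
  sInf {S : Submodule F A | IsSubalg mul S ∧ s ⊆ (S : Set A)}

end LeibnizDefs

/-!
Left multiplications satisfy `[L_x, L_y] = L_{xy}`, so they form a Lie algebra `L` acting on `A`, in
which a solvable ideal `R` of `A` becomes a solvable ideal `I`. Over an algebraically closed field,
Lie's theorem shows that `[L, I]` kills a nonzero vector in every nonzero finite-dimensional module:
a weight space of `I` is `L`-stable, so `[x, a]` acts on it as a commutator with a scalar.
Applied to dual modules this gives `[L, I]W ≠ W` for `W ≠ 0`, hence `[L, I]` acts nilpotently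
on `A`, and nilpotency descends along extensions of the base field. As the left multiplications by
`A·R + R·A` lie in `[L, I]`, this ideal of `A` is nilpotent.
-/

section LieModule

open LieAlgebra LieModule
open scoped TensorProduct

section CommRing

variable {R L M : Type*} [CommRing R] [LieRing L] [LieAlgebra R L] [AddCommGroup M] [Module R M]
  [LieRingModule L M] [LieModule R L M] (I : LieIdeal R L)

theorem lieIdeal_isNilpotent_iff_exists_lcs_eq_bot : IsNilpotent I M ↔ ∃ k, I.lcs M k = ⊥ := by
  simp only [isNilpotent_iff R, ← LieSubmodule.toSubmodule_eq_bot, LieIdeal.coe_lcs_eq]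

section BaseChange

variable (S : Type*) [CommRing S] [Algebra R S]

theorem isSolvable_lieIdeal_baseChange [IsSolvable I] : IsSolvable (I.baseChange S) := by
  obtain ⟨k, hk⟩ := IsSolvable.solvable R I
  rw [LieIdeal.derivedSeries_eq_bot_iff] at hk
  refine IsSolvable.mk (R := S) (k := k) ?_
  rw [LieIdeal.derivedSeries_eq_bot_iff, derivedSeriesOfIdeal_baseChange, hk,
    LieSubmodule.baseChange_bot]

theorem lieIdeal_lcs_baseChange (k : ℕ) :
    LieIdeal.lcs (I.baseChange S) (S ⊗[R] M) k = (I.lcs M k).baseChange S := by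
  induction k with
  | zero => simp only [LieIdeal.lcs_zero, LieSubmodule.baseChange_top]
  | succ k ih => simp only [LieIdeal.lcs_succ, ih, LieSubmodule.lie_baseChange]

theorem isNilpotent_lieIdeal_of_baseChange [Module.FaithfullyFlat R S]
    (h : IsNilpotent (I.baseChange S) (S ⊗[R] M)) : IsNilpotent I M := by
  obtain ⟨k, hk⟩ := (lieIdeal_isNilpotent_iff_exists_lcs_eq_bot _).1 h
  refine (lieIdeal_isNilpotent_iff_exists_lcs_eq_bot I).2 ⟨k, ?_⟩
  rw [lieIdeal_lcs_baseChange, ← LieSubmodule.toSubmodule_eq_bot, LieSubmodule.coe_baseChange,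
    ← Submodule.baseChange_bot] at hk
  exact (LieSubmodule.toSubmodule_eq_bot _).1 (Submodule.baseChange_injective hk)

end BaseChange

theorem lie_top_le_ker_weightSpaceOfIsLieTower [IsDomain R] [IsPrincipalIdealRing R] [CharZero R]
    [Module.Free R M] [Module.Finite R M] (χ : I → R) :
    ⁅(⊤ : LieIdeal R L), I⁆ ≤ LieModule.ker R L (weightSpaceOfIsLieTower (L := L) R M χ) := by
  refine (LieSubmodule.lie_le_iff _ _ _).2 fun x _ a ha => (LieModule.mem_ker _ _ _ _).2 fun w => ?_
  have lie_eq_smul (u : weightSpaceOfIsLieTower (L := L) R M χ) : ⁅a, u⁆ = χ ⟨a, ha⟩ • u :=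
    Subtype.ext ((mem_weightSpace _ _).1 u.2 ⟨a, ha⟩)
  rw [lie_lie, lie_eq_smul, lie_eq_smul, lie_smul, sub_self]

end CommRing

section Field

variable {K L V : Type*} [Field K] [CharZero K] [LieRing L] [LieAlgebra K L] [AddCommGroup V]
  [Module K V] [FiniteDimensional K V] [LieRingModule L V] [LieModule K L V] (I : LieIdeal K L)
  [IsSolvable I]

theorem exists_ne_zero_forall_mem_lie_top_lie_eq_zero [Nontrivial V] [IsTriangularizable K I V] :
    ∃ v : V, v ≠ 0 ∧ ∀ y ∈ ⁅(⊤ : LieIdeal K L), I⁆, ⁅y, v⁆ = 0 := by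
  obtain ⟨χ, _⟩ := exists_nontrivial_weightSpace_of_isSolvable K I V
  obtain ⟨v, hv0⟩ := exists_ne (0 : weightSpace V χ)
  refine ⟨v, fun hv => hv0 (Subtype.ext hv), fun y hy => ?_⟩
  have hker := lie_top_le_ker_weightSpaceOfIsLieTower (M := V) I χ hy
  exact congrArg Subtype.val ((LieModule.mem_ker _ _ _ _).1 hker ⟨v, v.2⟩)

section AlgClosed

variable [IsAlgClosed K]

theorem lie_top_lie_top_ne_top [Nontrivial V] :
    ⁅⁅(⊤ : LieIdeal K L), I⁆, (⊤ : LieSubmodule K L V)⁆ ≠ ⊤ := by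
  obtain ⟨φ, hφ0, hφ⟩ := exists_ne_zero_forall_mem_lie_top_lie_eq_zero (V := Module.Dual K V) I
  intro htop
  have le_ker : (⁅⁅(⊤ : LieIdeal K L), I⁆, (⊤ : LieSubmodule K L V)⁆).toSubmodule ≤
      LinearMap.ker φ := by
    rw [LieSubmodule.lieIdeal_oper_eq_linear_span', Submodule.span_le]
    rintro _ ⟨y, hy, w, -, rfl⟩
    exact neg_eq_zero.1 (LinearMap.congr_fun (hφ y hy) w)
  rw [htop, LieSubmodule.top_toSubmodule, top_le_iff, LinearMap.ker_eq_top] at le_ker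
  exact hφ0 le_ker

theorem lie_top_lie_ne_self {W : LieSubmodule K L V} (hW : W ≠ ⊥) :
    ⁅⁅(⊤ : LieIdeal K L), I⁆, W⁆ ≠ W := by
  have : Nontrivial W := (LieSubmodule.nontrivial_iff_ne_bot K L V).2 hW
  intro h
  refine lie_top_lie_top_ne_top (V := W) I ?_
  apply LieSubmodule.map_injective_of_injective W.injective_incl
  rw [LieSubmodule.map_bracket_eq, LieSubmodule.map_incl_top, h]

theorem isNilpotent_lie_top_of_isAlgClosed :
    IsNilpotent (⁅(⊤ : LieIdeal K L), I⁆ : LieIdeal K L) V := by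
  set J : LieIdeal K L := ⁅(⊤ : LieIdeal K L), I⁆
  have anti : Antitone (J.lcs V) := antitone_nat_of_succ_le fun k => by
    rw [LieIdeal.lcs_succ]
    exact LieSubmodule.lie_le_right _ _
  have := LieSubmodule.wellFoundedLT_of_isArtinian K L V
  obtain ⟨k, hk⟩ := WellFoundedLT.antitone_chain_condition anti
  refine (lieIdeal_isNilpotent_iff_exists_lcs_eq_bot J).2 ⟨k, ?_⟩
  by_contra hbot
  refine lie_top_lie_ne_self I hbot ?_
  rw [← LieIdeal.lcs_succ]
  exact (hk (k + 1) k.le_succ).symm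

end AlgClosed

theorem isNilpotent_lie_top_of_isSolvable :
    IsNilpotent (⁅(⊤ : LieIdeal K L), I⁆ : LieIdeal K L) V := by
  have := isSolvable_lieIdeal_baseChange I (AlgebraicClosure K)
  refine isNilpotent_lieIdeal_of_baseChange _ (AlgebraicClosure K) ?_
  rw [LieSubmodule.lie_baseChange, LieSubmodule.baseChange_top]
  exact isNilpotent_lie_top_of_isAlgClosed _

end Field

end LieModule

section Leibniz

attribute [local instance] LieRing.ofAssociativeRing

open LieAlgebra LieModule

variable {F A : Type*} [Field F] [AddCommGroup A] [Module F A] {mul : A →ₗ[F] A →ₗ[F] A}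

theorem mul_mem_mulSub {B C : Submodule F A} {b c : A} (hb : b ∈ B) (hc : c ∈ C) :
    mul b c ∈ mulSub mul B C :=
  subset_span ⟨b, hb, c, hc, rfl⟩

theorem mulSub_le {B C D : Submodule F A} :
    mulSub mul B C ≤ D ↔ ∀ b ∈ B, ∀ c ∈ C, mul b c ∈ D := by
  refine ⟨fun h b hb c hc => h (mul_mem_mulSub hb hc), fun h => span_le.2 ?_⟩
  rintro _ ⟨b, hb, c, hc, rfl⟩
  exact h b hb c hc

theorem isIdealIn_fSub {S I : Submodule F A} (hI : IsIdealIn mul I S) :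
    IsIdealIn mul (fSub mul S I) S := by
  have fSub_le : fSub mul S I ≤ I :=
    sup_le (mulSub_le.2 fun x hx y hy => (hI.2 x hx y hy).1)
      (mulSub_le.2 fun y hy x hx => (hI.2 x hx y hy).2)
  exact ⟨fSub_le.trans hI.1, fun x hx y hy =>
    ⟨mem_sup_left (mul_mem_mulSub hx (fSub_le hy)), mem_sup_right (mul_mem_mulSub (fSub_le hy) hx)⟩⟩

variable (hleib : ∀ x y z : A, mul x (mul y z) = mul (mul x y) z + mul y (mul x z))

include hleib in
theorem lie_mul_eq_mul_mul (x y : A) : ⁅mul x, mul y⁆ = mul (mul x y) := by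
  ext z
  rw [LieRing.of_associative_ring_bracket, LinearMap.sub_apply, Module.End.mul_apply,
    Module.End.mul_apply, hleib x y z, add_sub_cancel_right]

/-- The Lie algebra of left multiplications of a left Leibniz algebra. It acts faithfully on the
algebra and carries the products into Lie brackets. -/
def leftMulAlgebra : LieSubalgebra F (Module.End F A) where
  toSubmodule := LinearMap.range mul
  lie_mem' := by
    rintro _ _ ⟨x, rfl⟩ ⟨y, rfl⟩
    exact ⟨mul x y, (lie_mul_eq_mul_mul hleib x y).symm⟩

/-- `x ↦ L_x`, as a surjection onto the Lie algebra of left multiplications. -/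
def leftMul : A →ₗ[F] leftMulAlgebra hleib :=
  mul.rangeRestrict

theorem leftMul_surjective : Function.Surjective (leftMul hleib) :=
  mul.surjective_rangeRestrict

theorem lie_leftMul (x y : A) : ⁅leftMul hleib x, leftMul hleib y⁆ = leftMul hleib (mul x y) :=
  Subtype.ext (lie_mul_eq_mul_mul hleib x y)

/-- The image of an ideal of a left Leibniz algebra in its Lie algebra of left multiplications. -/
def leftMulIdeal {I : Submodule F A} (hI : IsIdealIn mul I ⊤) :
    LieIdeal F (leftMulAlgebra hleib) where
  toSubmodule := I.map (leftMul hleib)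
  lie_mem := by
    rintro f _ ⟨a, ha, rfl⟩
    obtain ⟨x, rfl⟩ := leftMul_surjective hleib f
    exact ⟨mul x a, (hI.2 x trivial a ha).1, (lie_leftMul hleib x a).symm⟩

theorem leftMul_mem_leftMulIdeal {I : Submodule F A} (hI : IsIdealIn mul I ⊤) {a : A}
    (ha : a ∈ I) : leftMul hleib a ∈ leftMulIdeal hleib hI :=
  mem_map_of_mem ha

theorem derivedSeriesOfIdeal_leftMulIdeal_le {I : Submodule F A} (hI : IsIdealIn mul I ⊤) (k : ℕ) :
    (derivedSeriesOfIdeal F _ k (leftMulIdeal hleib hI)).toSubmodule ≤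
      (ds mul I k).map (leftMul hleib) := by
  induction k with
  | zero => exact le_rfl
  | succ k ih =>
    rw [derivedSeriesOfIdeal_succ, LieSubmodule.lieIdeal_oper_eq_linear_span', span_le]
    rintro _ ⟨f, hf, g, hg, rfl⟩
    obtain ⟨x, hx, rfl⟩ := ih hf
    obtain ⟨y, hy, rfl⟩ := ih hg
    exact ⟨mul x y, mul_mem_mulSub hx hy, (lie_leftMul hleib x y).symm⟩

theorem isSolvable_leftMulIdeal {I : Submodule F A} (hI : IsIdealIn mul I ⊤)
    (hsol : IsSolvableSub mul I) : IsSolvable (leftMulIdeal hleib hI) := by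
  obtain ⟨k, hk⟩ := hsol
  refine IsSolvable.mk (R := F) (k := k) ?_
  rw [LieIdeal.derivedSeries_eq_bot_iff, ← LieSubmodule.toSubmodule_eq_bot, ← le_bot_iff]
  simpa only [hk, Submodule.map_bot] using derivedSeriesOfIdeal_leftMulIdeal_le hleib hI k

theorem fSub_top_le_comap_leftMul {I : Submodule F A} (hI : IsIdealIn mul I ⊤) :
    fSub mul ⊤ I ≤ Submodule.comap (leftMul hleib)
      (⁅(⊤ : LieIdeal F (leftMulAlgebra hleib)), leftMulIdeal hleib hI⁆).toSubmodule := by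
  refine sup_le (mulSub_le.2 fun x _ y hy => ?_) (mulSub_le.2 fun y hy x _ => ?_)
  · rw [Submodule.mem_comap, ← lie_leftMul]
    exact LieSubmodule.lie_mem_lie (LieSubmodule.mem_top _) (leftMul_mem_leftMulIdeal hleib hI hy)
  · rw [Submodule.mem_comap, ← lie_leftMul, LieSubmodule.mem_toSubmodule, LieSubmodule.lie_comm]
    exact LieSubmodule.lie_mem_lie (leftMul_mem_leftMulIdeal hleib hI hy) (LieSubmodule.mem_top _)

theorem isNilpotentSub_of_le_comap_leftMul {B : Submodule F A}
    (J : LieIdeal F (leftMulAlgebra hleib)) [IsNilpotent J A]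
    (hB : B ≤ J.toSubmodule.comap (leftMul hleib)) : IsNilpotentSub mul B := by
  have lcs_le (n : ℕ) : lcs mul B n ≤ (lowerCentralSeries F J A n).toSubmodule := by
    induction n with
    | zero => exact le_top
    | succ n ih =>
      refine mulSub_le.2 fun b hb c hc => ?_
      rw [lowerCentralSeries_succ]
      exact LieSubmodule.lie_mem_lie (x := (⟨leftMul hleib b, hB hb⟩ : J))
        (LieSubmodule.mem_top _) (ih hc)
  obtain ⟨m, hm⟩ := IsNilpotent.nilpotent F J A
  refine ⟨m, le_bot_iff.1 ?_⟩
  simpa only [hm, LieSubmodule.bot_toSubmodule] using lcs_le m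

include hleib in
theorem isNilpotentSub_fSub_top [CharZero F] [FiniteDimensional F A] {I : Submodule F A}
    (hI : IsIdealIn mul I ⊤) (hsol : IsSolvableSub mul I) : IsNilpotentSub mul (fSub mul ⊤ I) := by
  have := isSolvable_leftMulIdeal hleib hI hsol
  have := isNilpotent_lie_top_of_isSolvable (V := A) (leftMulIdeal hleib hI)
  exact isNilpotentSub_of_le_comap_leftMul hleib _ (fSub_top_le_comap_leftMul hleib hI)

end Leibniz

/-- over characteristic zero, `A·R + R·A ⊆ N` where `R = rad(A)`,
`N = nilrad(A)`. -/
theorem stmt_8 {F A : Type*} [Field F] [CharZero F]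
    [AddCommGroup A] [Module F A] [FiniteDimensional F A]
    (mul : A →ₗ[F] A →ₗ[F] A)
    (hleib : ∀ x y z : A, mul x (mul y z) = mul (mul x y) z + mul y (mul x z))
    (R N : Submodule F A)
    (hR : IsRadicalIn mul ⊤ R) (hN : IsNilradicalIn mul ⊤ N) :
    fSub mul ⊤ R ≤ N := by
  obtain ⟨hRideal, hRsol, -⟩ := hR
  obtain ⟨-, -, hNmax⟩ := hN
  exact hNmax _ (isIdealIn_fSub hRideal) (isNilpotentSub_fSub_top hleib hRideal hRsol)
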